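/- arXiv:math/0507016 — 3 statements merged into one kernel-verified Lean document; each statement's English description precedes it below -/
import Mathlib

section
/- Let k be a field and (V, ω) a finite-dimensional k-vector space equipped with a nondegenerate alternating bilinear form ω. Let U₀, U₁, U_∞ be Lagrangian subspaces of V that are pairwise complementary (Uᵢ ∩ Uⱼ = {0}, hence V = Uᵢ ⊕ Uⱼ, for all i ≠ j in {0, 1, ∞}). Then there exists a family (L_t)_{t ∈ k} of Lagrangian subspaces of V such that L₀ = U₀, L₁ = U₁, L_t ∩ U_∞ = {0} for every t ∈ k, and L_t ∩ L_s = {0} whenever t ≠ s in k. -/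
open LinearMap (BilinForm)

/-!
The projections of `V` with kernel `U_∞` form an affine space, and taking ranges identifies it with
the set of complements of `U_∞`. The pencil is the line in this affine space through the projections
`P₀` and `P₁` onto `U₀` and `U₁`: `L_t` is the range of `P_t = (1 - t) P₀ + t P₁`. Since `P₁ - P₀`
maps into the isotropic space `U_∞`, the form `ω (P_t x) (P_t y)` is affine-linear in `t`; it
vanishes at `0` and `1`, hence identically. If `P_t x = P_s x` with `t ≠ s`, then
`P₀ x = P₁ x ∈ U₀ ∩ U₁ = 0`.
-/

section Pencil

variable {R V : Type*} [CommRing R] [AddCommGroup V] [Module R V] {U₀ U₁ K : Submodule R V}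
  (h₀ : IsCompl U₀ K) (h₁ : IsCompl U₁ K)

/-- The affine line `t ↦ (1 - t) P₀ + t P₁` of projections with kernel `K`, where `P₀` and `P₁` are
the projections along `K` onto its complements `U₀` and `U₁`. -/
noncomputable def projectionPencil (t : R) : V →ₗ[R] V :=
  AffineMap.lineMap (U₀.projection K h₀) (U₁.projection K h₁) t

/-- The pencil of complements of `K` through `U₀` (at `t = 0`) and `U₁` (at `t = 1`), given as the
ranges of the projections in `projectionPencil`. -/
noncomputable def complementPencil (t : R) : Submodule R V :=
  LinearMap.range (projectionPencil h₀ h₁ t)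

theorem projectionPencil_apply (t : R) (x : V) :
    projectionPencil h₀ h₁ t x =
      (1 - t) • U₀.projection K h₀ x + t • U₁.projection K h₁ x := by
  simp [projectionPencil, AffineMap.lineMap_apply_module]

theorem projectionPencil_apply_of_mem {x : V} (hx : x ∈ K) (t : R) :
    projectionPencil h₀ h₁ t x = 0 := by
  rw [projectionPencil_apply, (Submodule.projection_apply_eq_zero_iff h₀).2 hx,
    (Submodule.projection_apply_eq_zero_iff h₁).2 hx, smul_zero, smul_zero, add_zero]

theorem sub_projectionPencil_mem (t : R) (x : V) : x - projectionPencil h₀ h₁ t x ∈ K := by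
  have affine_combination : x - projectionPencil h₀ h₁ t x =
      (1 - t) • (x - U₀.projection K h₀ x) + t • (x - U₁.projection K h₁ x) := by
    rw [projectionPencil_apply]
    module
  rw [affine_combination]
  exact K.add_mem (K.smul_mem _ (Submodule.sub_projection_mem h₀ x))
    (K.smul_mem _ (Submodule.sub_projection_mem h₁ x))

theorem isIdempotentElem_projectionPencil (t : R) :
    IsIdempotentElem (projectionPencil h₀ h₁ t) := by
  ext x
  have h := projectionPencil_apply_of_mem h₀ h₁ (sub_projectionPencil_mem h₀ h₁ t x) t
  rw [map_sub, sub_eq_zero] at h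
  exact h.symm

theorem ker_projectionPencil (t : R) : LinearMap.ker (projectionPencil h₀ h₁ t) = K := by
  ext x
  refine ⟨fun hx => ?_, fun hx => projectionPencil_apply_of_mem h₀ h₁ hx t⟩
  simpa only [LinearMap.mem_ker.1 hx, sub_zero] using sub_projectionPencil_mem h₀ h₁ t x

theorem isCompl_complementPencil (t : R) : IsCompl (complementPencil h₀ h₁ t) K := by
  simpa only [complementPencil, ker_projectionPencil] using
    LinearMap.IsIdempotentElem.isCompl (isIdempotentElem_projectionPencil h₀ h₁ t)

theorem complementPencil_zero : complementPencil h₀ h₁ 0 = U₀ := by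
  simp [complementPencil, projectionPencil]

theorem complementPencil_one : complementPencil h₀ h₁ 1 = U₁ := by
  simp [complementPencil, projectionPencil]

theorem disjoint_complementPencil (h₀₁ : Disjoint U₀ U₁) {t s : R}
    (hts : IsSMulRegular V (t - s)) :
    Disjoint (complementPencil h₀ h₁ t) (complementPencil h₀ h₁ s) := by
  refine Submodule.disjoint_def.2 fun x hxt hxs => ?_
  have fixed_t : projectionPencil h₀ h₁ t x = x :=
    (LinearMap.IsIdempotentElem.mem_range_iff (isIdempotentElem_projectionPencil h₀ h₁ t)).1 hxt
  have fixed_s : projectionPencil h₀ h₁ s x = x :=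
    (LinearMap.IsIdempotentElem.mem_range_iff (isIdempotentElem_projectionPencil h₀ h₁ s)).1 hxs
  rw [projectionPencil_apply] at fixed_t fixed_s
  have projections_eq : U₁.projection K h₁ x = U₀.projection K h₀ x := by
    apply hts
    linear_combination (norm := module) fixed_t - fixed_s
  have projection_eq_zero : U₀.projection K h₀ x = 0 :=
    Submodule.disjoint_def.1 h₀₁ _ (Submodule.projection_apply_mem h₀ x)
      (projections_eq ▸ Submodule.projection_apply_mem h₁ x)
  rw [← fixed_t, projections_eq, projection_eq_zero, smul_zero, smul_zero, add_zero]

theorem complementPencil_le_orthogonal {ω : BilinForm R V} (hU₀ : U₀ ≤ ω.orthogonal U₀)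
    (hU₁ : U₁ ≤ ω.orthogonal U₁) (hK : K ≤ ω.orthogonal K) (t : R) :
    complementPencil h₀ h₁ t ≤ ω.orthogonal (complementPencil h₀ h₁ t) := by
  rintro _ ⟨y, rfl⟩ _ ⟨x, rfl⟩
  have isotropic₀ := hU₀ (Submodule.projection_apply_mem h₀ y) _
    (Submodule.projection_apply_mem h₀ x)
  have isotropic₁ := hU₁ (Submodule.projection_apply_mem h₁ y) _
    (Submodule.projection_apply_mem h₁ x)
  have projection_sub_mem (z : V) : U₁.projection K h₁ z - U₀.projection K h₀ z ∈ K := by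
    simpa only [sub_sub_sub_cancel_left] using
      K.sub_mem (Submodule.sub_projection_mem h₀ z) (Submodule.sub_projection_mem h₁ z)
  have isotropic_sub := hK (projection_sub_mem y) _ (projection_sub_mem x)
  simp only [projectionPencil_apply, map_add, map_sub, map_smul,
    LinearMap.add_apply, LinearMap.sub_apply, LinearMap.smul_apply, smul_eq_mul]
    at isotropic₀ isotropic₁ isotropic_sub ⊢
  linear_combination (1 - t) * isotropic₀ + t * isotropic₁ - t * (1 - t) * isotropic_sub

end Pencil

section Lagrangian

theorem orthogonal_sup {R V : Type*} [CommRing R] [AddCommGroup V] [Module R V]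
    (ω : BilinForm R V) (U W : Submodule R V) :
    ω.orthogonal (U ⊔ W) = ω.orthogonal U ⊓ ω.orthogonal W := by
  refine le_antisymm (le_inf (BilinForm.orthogonal_le le_sup_left)
    (BilinForm.orthogonal_le le_sup_right)) ?_
  rintro x ⟨hxU, hxW⟩ y hy
  obtain ⟨u, hu, w, hw, rfl⟩ := Submodule.mem_sup.1 hy
  rw [map_add, LinearMap.add_apply, hxU u hu, hxW w hw, add_zero]

theorem eq_orthogonal_of_isCompl {R V : Type*} [CommRing R] [AddCommGroup V] [Module R V]
    {ω : BilinForm R V} (hω : ω.orthogonal ⊤ = ⊥) {U W : Submodule R V} (hUW : IsCompl U W)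
    (hU : U ≤ ω.orthogonal U) (hW : W ≤ ω.orthogonal W) : U = ω.orthogonal U := by
  have orthogonal_inf_eq_bot : ω.orthogonal U ⊓ W = ⊥ := by
    rw [eq_bot_iff]
    calc ω.orthogonal U ⊓ W ≤ ω.orthogonal U ⊓ ω.orthogonal W := inf_le_inf_left _ hW
      _ = ω.orthogonal (U ⊔ W) := (orthogonal_sup ω U W).symm
      _ = ⊥ := by rw [hUW.sup_eq_top, hω]
  apply eq_of_le_of_inf_le_of_sup_le hU
  · exact orthogonal_inf_eq_bot.trans_le bot_le
  · exact le_top.trans_eq hUW.sup_eq_top.symm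

theorem isCompl_of_disjoint_of_orthogonal_le {k V : Type*} [Field k] [AddCommGroup V] [Module k V]
    [FiniteDimensional k V] {ω : BilinForm k V} {U W : Submodule k V} (hU : ω.orthogonal U ≤ U)
    (hW : ω.orthogonal W ≤ W) (hUW : Disjoint U W) : IsCompl U W := by
  have finrank_le_two_mul {X : Submodule k V} (hX : ω.orthogonal X ≤ X) :
      Module.finrank k V ≤ 2 * Module.finrank k X := by
    have := BilinForm.finrank_add_finrank_orthogonal' (B := ω) X
    have := Submodule.finrank_mono hX
    omega
  refine (Submodule.isCompl_iff_disjoint U W ?_).2 hUW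
  have := finrank_le_two_mul hU
  have := finrank_le_two_mul hW
  omega

theorem pencil_through_three_lagrangians_general {R V : Type*} [CommRing R] [AddCommGroup V]
    [Module R V] (ω : BilinForm R V) (U₀ U₁ Uinf : Submodule R V)
    (hU₀ : U₀ = ω.orthogonal U₀) (hU₁ : U₁ = ω.orthogonal U₁) (hUinf : Uinf = ω.orthogonal Uinf)
    (h01 : Disjoint U₀ U₁) (h0inf : IsCompl U₀ Uinf) (h1inf : IsCompl U₁ Uinf) :
    ∃ L : R → Submodule R V,
      L 0 = U₀ ∧ L 1 = U₁ ∧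
      (∀ t : R, L t = ω.orthogonal (L t)) ∧
      (∀ t : R, IsCompl (L t) Uinf) ∧
      (∀ t s : R, IsSMulRegular V (t - s) → Disjoint (L t) (L s)) := by
  have orthogonal_top : ω.orthogonal ⊤ = ⊥ := by
    rw [eq_bot_iff, ← h0inf.inf_eq_bot]
    exact le_inf ((BilinForm.orthogonal_le le_top).trans_eq hU₀.symm)
      ((BilinForm.orthogonal_le le_top).trans_eq hUinf.symm)
  exact ⟨complementPencil h0inf h1inf, complementPencil_zero h0inf h1inf,
    complementPencil_one h0inf h1inf,
    fun t => eq_orthogonal_of_isCompl orthogonal_top (isCompl_complementPencil h0inf h1inf t)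
      (complementPencil_le_orthogonal h0inf h1inf hU₀.le hU₁.le hUinf.le t) hUinf.le,
    isCompl_complementPencil h0inf h1inf,
    fun _ _ => disjoint_complementPencil h0inf h1inf h01⟩

end Lagrangian

/-- Through three pairwise complementary Lagrangian subspaces `U₀, U₁, U_∞` of a
symplectic vector space there passes a one-parameter family `(L_t)_{t ∈ k}` of
pairwise transverse Lagrangian subspaces with `L₀ = U₀`, `L₁ = U₁`, each `L_t`
transverse to `U_∞`. -/
theorem pencil_through_three_lagrangians
    {k V : Type*} [Field k] [AddCommGroup V] [Module k V] [FiniteDimensional k V]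
    (ω : BilinForm k V) (hnd : ω.Nondegenerate) (halt : ω.IsAlt)
    (U₀ U₁ Uinf : Submodule k V)
    (hU₀ : U₀ = ω.orthogonal U₀) (hU₁ : U₁ = ω.orthogonal U₁)
    (hUinf : Uinf = ω.orthogonal Uinf)
    (h01 : U₀ ⊓ U₁ = ⊥) (h0inf : U₀ ⊓ Uinf = ⊥) (h1inf : U₁ ⊓ Uinf = ⊥) :
    ∃ L : k → Submodule k V,
      L 0 = U₀ ∧ L 1 = U₁ ∧
      (∀ t : k, L t = ω.orthogonal (L t)) ∧
      (∀ t : k, L t ⊓ Uinf = ⊥) ∧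
      (∀ t s : k, t ≠ s → L t ⊓ L s = ⊥) := by
  obtain ⟨L, hL0, hL1, hL, hLinf, hLL⟩ := pencil_through_three_lagrangians_general ω U₀ U₁ Uinf
    hU₀ hU₁ hUinf (disjoint_iff.2 h01)
    (isCompl_of_disjoint_of_orthogonal_le hU₀.ge hUinf.ge (disjoint_iff.2 h0inf))
    (isCompl_of_disjoint_of_orthogonal_le hU₁.ge hUinf.ge (disjoint_iff.2 h1inf))
  exact ⟨L, hL0, hL1, hL, fun t => (hLinf t).inf_eq_bot,
    fun t s hts => (hLL t s (.of_ne_zero (sub_ne_zero.2 hts))).eq_bot⟩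
end

section
/- Let k be a field and let α be the alternating bilinear form on k⁶ given by α(x, y) = x₁y₄ − x₄y₁ + x₂y₅ − x₅y₂ + x₃y₆ − x₆y₃ (i.e., α = x₁∧x₄ + x₂∧x₅ + x₃∧x₆ in the standard basis e₁, …, e₆). Let B = (b_{ij}) be a symmetric invertible 3×3 matrix over k. For t ∈ k let L_t ⊆ k⁶ be the span of the three vectors e_i + t·(b_{1i}e₄ + b_{2i}e₅ + b_{3i}e₆), i = 1, 2, 3, and let L_∞ = span(e₄, e₅, e₆). Then: (i) L₀ = span(e₁, e₂, e₃); (ii) each L_t, t ∈ k, and L_∞ is a Lagrangian subspace of (k⁶, α); and (iii) the subspaces L_t, t ∈ k ∪ {∞}, pairwise intersect only in {0}. -/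
/-- The standard alternating form `α = x₁∧x₄ + x₂∧x₅ + x₃∧x₆` on `k⁶`. -/
def stdAlt {k : Type*} [Field k] (x y : Fin 6 → k) : k :=
  x 0 * y 3 - x 3 * y 0 + x 1 * y 4 - x 4 * y 1 + x 2 * y 5 - x 5 * y 2

/-- The vector `eᵢ + t·(b_{1i}e₄ + b_{2i}e₅ + b_{3i}e₆)` of `k⁶` (for `i = 1,2,3`,
indexed here by `Fin 3`). -/
def pencilVec {k : Type*} [Field k] (B : Matrix (Fin 3) (Fin 3) k) (t : k) (i : Fin 3) :
    Fin 6 → k :=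
  (Pi.single (⟨i.val, by omega⟩ : Fin 6) (1 : k) : Fin 6 → k) +
    t • (B 0 i • (Pi.single (3 : Fin 6) (1 : k) : Fin 6 → k) +
          B 1 i • (Pi.single (4 : Fin 6) (1 : k) : Fin 6 → k) +
          B 2 i • (Pi.single (5 : Fin 6) (1 : k) : Fin 6 → k))

/-!
Identify `k⁶` with `k³ × k³`, so that `α` pairs `(u, x)` with `(v, y)` to `u ⬝ y - x ⬝ v`. Then
`L_t` is the graph of `t • B` and `L_∞` is the vertical factor `0 × k³`. Restricted to the graph of
a matrix `A`, the form is `(u, v) ↦ u ⬝ (A - Aᵀ) v`, so the graph is Lagrangian exactly when `A`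
is symmetric. Two graphs meet over the kernel of the difference of their matrices, here
`(t - s) • B`, and a graph always meets the vertical factor trivially.
-/

open Matrix

section Graph

variable {R M N : Type*} [Ring R] [AddCommGroup M] [Module R M] [AddCommGroup N] [Module R N]

theorem finrank_graph (f : M →ₗ[R] N) : Module.finrank R f.graph = Module.finrank R M := by
  rw [f.graph_eq_range_prod]
  exact LinearMap.finrank_range_of_inj fun _ _ h => congrArg Prod.fst h

theorem disjoint_graph_iff_ker_sub_eq_bot {f g : M →ₗ[R] N} :
    Disjoint f.graph g.graph ↔ (f - g).ker = ⊥ := by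
  simp only [Submodule.disjoint_def, LinearMap.ker_eq_bot', LinearMap.mem_graph_iff,
    LinearMap.sub_apply, sub_eq_zero, Prod.forall, Prod.mk_eq_zero]
  constructor
  · intro h x hx
    exact (h x (f x) rfl hx).1
  · rintro h x _ rfl hx
    have hx0 : x = 0 := h x hx
    exact ⟨hx0, by rw [hx0, map_zero]⟩

theorem disjoint_graph_range_inr (f : M →ₗ[R] N) :
    Disjoint f.graph (LinearMap.inr R M N).range := by
  rw [Submodule.disjoint_def]
  rintro _ hy ⟨y, rfl⟩
  obtain rfl : y = 0 := by simpa using hy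
  exact map_zero _

end Graph

theorem disjoint_graph_smul_mulVecLin {R n : Type*} [CommRing R] [IsDomain R] [Fintype n]
    [DecidableEq n] {B : Matrix n n R} (hB : B.det ≠ 0) {t s : R} (hts : t ≠ s) :
    Disjoint (t • B).mulVecLin.graph (s • B).mulVecLin.graph := by
  rw [disjoint_graph_iff_ker_sub_eq_bot, LinearMap.ker_eq_bot']
  intro x hx
  have smul_mulVec_eq_zero : (t - s) • B *ᵥ x = 0 := by
    simpa [sub_smul, smul_mulVec] using hx
  have mulVec_eq_zero : B *ᵥ x = 0 :=
    (smul_eq_zero.mp smul_mulVec_eq_zero).resolve_left (sub_ne_zero.mpr hts)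
  exact eq_zero_of_mulVec_eq_zero hB mulVec_eq_zero

theorem range_fin_three {α : Type*} (v : Fin 3 → α) : Set.range v = {v 0, v 1, v 2} := by
  ext
  simp [Fin.exists_fin_succ, eq_comm]

section Comap

variable {R M N : Type*} [Semiring R] [AddCommMonoid M] [Module R M] [AddCommMonoid N] [Module R N]

theorem span_range_eq_comap_range_of_apply_eq {n : Type*} [Finite n] [DecidableEq n]
    {g : M →ₗ[R] N} (hg : Function.Injective g) {v : n → M} {f : (n → R) →ₗ[R] N}
    (hv : ∀ i, g (v i) = f (Pi.single i 1)) :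
    Submodule.span R (Set.range v) = f.range.comap g := by
  have range_f : f.range = Submodule.span R (Set.range fun i => f (Pi.single i 1)) := by
    rw [LinearMap.range_eq_map, ← (Pi.basisFun R n).span_eq, Submodule.map_span, ← Set.range_comp]
    simp only [Function.comp_def, Pi.basisFun_apply]
  have map_span : (Submodule.span R (Set.range v)).map g = f.range := by
    rw [range_f, Submodule.map_span, ← Set.range_comp]
    exact congrArg (fun w => Submodule.span R (Set.range w)) (funext hv)
  rw [← map_span, Submodule.comap_map_eq_of_injective hg]

theorem comap_inf_comap_eq_bot_of_disjoint {f : M →ₗ[R] N} (hf : f.ker = ⊥)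
    {p q : Submodule R N} (hpq : Disjoint p q) :
    p.comap f ⊓ q.comap f = ⊥ := by
  rw [← Submodule.comap_inf, hpq.eq_bot, Submodule.comap_bot, hf]

end Comap

section Symplectic

variable {R n : Type*} [CommRing R] [Fintype n]

/-- The standard symplectic form on `Rⁿ × Rⁿ`: each factor is isotropic, and the dot product pairs
the first factor with the second. -/
def prodSymplecticForm (p q : (n → R) × (n → R)) : R :=
  p.1 ⬝ᵥ q.2 - p.2 ⬝ᵥ q.1

theorem prodSymplecticForm_mulVec (A : Matrix n n R) (u v : n → R) :
    prodSymplecticForm (u, A *ᵥ u) (v, A *ᵥ v) = u ⬝ᵥ (A - Aᵀ) *ᵥ v := by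
  rw [prodSymplecticForm, sub_mulVec, dotProduct_sub, dotProduct_mulVec u Aᵀ, vecMul_transpose]

theorem isSymm_iff_forall_mem_graph_prodSymplecticForm_eq_zero {A : Matrix n n R} :
    A.IsSymm ↔
      ∀ p ∈ A.mulVecLin.graph, ∀ q ∈ A.mulVecLin.graph, prodSymplecticForm p q = 0 := by
  classical
  constructor
  · rintro hA ⟨u, u'⟩ hu ⟨v, v'⟩ hv
    obtain rfl : u' = A *ᵥ u := hu
    obtain rfl : v' = A *ᵥ v := hv
    rw [prodSymplecticForm_mulVec, hA.eq, sub_self, zero_mulVec, dotProduct_zero]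
  · intro h
    ext i j
    have hij := h (Pi.single j 1, A *ᵥ Pi.single j 1) rfl (Pi.single i 1, A *ᵥ Pi.single i 1) rfl
    rw [prodSymplecticForm_mulVec] at hij
    simpa [sub_eq_zero, eq_comm] using hij

end Symplectic

section Lagrangian

variable {k n : Type*} [Field k] [Fintype n]

/-- A Lagrangian subspace of `kⁿ × kⁿ` with its standard symplectic form, encoded as an isotropic
subspace of half the dimension. -/
structure IsLagrangian (W : Submodule k ((n → k) × (n → k))) : Prop where
  finrank_eq : Module.finrank k W = Fintype.card n
  isotropic : ∀ p ∈ W, ∀ q ∈ W, prodSymplecticForm p q = 0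

theorem isLagrangian_graph_mulVecLin_iff {A : Matrix n n k} :
    IsLagrangian A.mulVecLin.graph ↔ A.IsSymm := by
  rw [isSymm_iff_forall_mem_graph_prodSymplecticForm_eq_zero]
  refine ⟨IsLagrangian.isotropic, fun h => ⟨?_, h⟩⟩
  rw [finrank_graph, Module.finrank_fintype_fun_eq_card]

theorem isLagrangian_range_inr : IsLagrangian (LinearMap.inr k (n → k) (n → k)).range where
  finrank_eq := by
    rw [LinearMap.finrank_range_of_inj LinearMap.inr_injective, Module.finrank_fintype_fun_eq_card]
  isotropic := by
    rintro _ ⟨u, rfl⟩ _ ⟨v, rfl⟩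
    simp [prodSymplecticForm]

end Lagrangian

section Coordinates

/-- The identification `R⁶ ≃ R³ × R³` separating the first three coordinates from the last three. -/
def splitCoords (R : Type*) [Semiring R] : (Fin 6 → R) ≃ₗ[R] (Fin 3 → R) × (Fin 3 → R) :=
  (LinearEquiv.funCongrLeft R R (finSumFinEquiv (m := 3) (n := 3))).trans
    (LinearEquiv.sumArrowLequivProdArrow (Fin 3) (Fin 3) R R)

theorem splitCoords_apply {R : Type*} [Semiring R] (x : Fin 6 → R) :
    splitCoords R x = (![x 0, x 1, x 2], ![x 3, x 4, x 5]) := by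
  ext i <;> fin_cases i <;> rfl

theorem splitCoords_single_natAdd {R : Type*} [Semiring R] (i : Fin 3) :
    splitCoords R (Pi.single (Fin.natAdd 3 i) 1) = (0, Pi.single i 1) := by
  ext j <;> fin_cases i <;> fin_cases j <;> simp [splitCoords_apply]

variable {k : Type*} [Field k]

theorem prodSymplecticForm_splitCoords (x y : Fin 6 → k) :
    prodSymplecticForm (splitCoords k x) (splitCoords k y) = stdAlt x y := by
  simp only [prodSymplecticForm, splitCoords_apply, stdAlt, vec3_dotProduct']
  ring

theorem splitCoords_pencilVec (B : Matrix (Fin 3) (Fin 3) k) (t : k) (i : Fin 3) :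
    splitCoords k (pencilVec B t i) = (Pi.single i 1, (t • B) *ᵥ Pi.single i 1) := by
  ext j <;> fin_cases i <;> fin_cases j <;> simp [splitCoords_apply, pencilVec]

theorem IsLagrangian.comap_splitCoords {W : Submodule k ((Fin 3 → k) × (Fin 3 → k))}
    (hW : IsLagrangian W) :
    Module.finrank k (W.comap (splitCoords k).toLinearMap) = 3 ∧
      ∀ x ∈ W.comap (splitCoords k).toLinearMap, ∀ y ∈ W.comap (splitCoords k).toLinearMap,
        stdAlt x y = 0 := by
  constructor
  · rw [Submodule.comap_equiv_eq_map_symm, LinearEquiv.finrank_map_eq, hW.finrank_eq,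
      Fintype.card_fin]
  · intro x hx y hy
    rw [← prodSymplecticForm_splitCoords]
    exact hW.isotropic _ hx _ hy

theorem span_pencilVec_eq_comap_graph (B : Matrix (Fin 3) (Fin 3) k) (t : k) :
    Submodule.span k {pencilVec B t 0, pencilVec B t 1, pencilVec B t 2} =
      (t • B).mulVecLin.graph.comap (splitCoords k).toLinearMap := by
  rw [← range_fin_three, LinearMap.graph_eq_range_prod]
  exact span_range_eq_comap_range_of_apply_eq (splitCoords k).injective (splitCoords_pencilVec B t)

theorem span_single_eq_comap_range_inr :
    Submodule.span k {(Pi.single 3 1 : Fin 6 → k), Pi.single 4 1, Pi.single 5 1} =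
      (LinearMap.inr k (Fin 3 → k) (Fin 3 → k)).range.comap (splitCoords k).toLinearMap := by
  rw [← span_range_eq_comap_range_of_apply_eq (splitCoords k).injective splitCoords_single_natAdd,
    range_fin_three]
  rfl

theorem pencilVec_zero (B : Matrix (Fin 3) (Fin 3) k) (i : Fin 3) :
    pencilVec B 0 i = Pi.single (Fin.castAdd 3 i) 1 := by
  rw [pencilVec, zero_smul, add_zero]
  rfl

end Coordinates

/-- The explicit family `exp(tB)` of pairwise disjoint Lagrangian planes through
three given points of `LG(3,6)`, for a symmetric invertible matrix `B`. -/
theorem explicit_lagrangian_pencil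
    {k : Type*} [Field k] (B : Matrix (Fin 3) (Fin 3) k)
    (hsym : B.IsSymm) (hinv : IsUnit B.det)
    (L : k → Submodule k (Fin 6 → k))
    (hL : ∀ t : k, L t =
      Submodule.span k {pencilVec B t 0, pencilVec B t 1, pencilVec B t 2})
    (Linf : Submodule k (Fin 6 → k))
    (hLinf : Linf = Submodule.span k
      {Pi.single (3 : Fin 6) (1 : k), Pi.single (4 : Fin 6) (1 : k),
        Pi.single (5 : Fin 6) (1 : k)}) :
    -- (i) `L 0` is the span of `e₁, e₂, e₃`
    L 0 = Submodule.span k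
        {Pi.single (0 : Fin 6) (1 : k), Pi.single (1 : Fin 6) (1 : k),
          Pi.single (2 : Fin 6) (1 : k)} ∧
    -- (ii) each `L t` and `Linf` is Lagrangian: 3-dimensional and isotropic for `α`
    (∀ t : k, Module.finrank k (L t) = 3 ∧
      ∀ x ∈ L t, ∀ y ∈ L t, stdAlt x y = 0) ∧
    (Module.finrank k Linf = 3 ∧ ∀ x ∈ Linf, ∀ y ∈ Linf, stdAlt x y = 0) ∧
    -- (iii) the subspaces pairwise intersect only in `{0}`
    (∀ t s : k, t ≠ s → L t ⊓ L s = ⊥) ∧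
    (∀ t : k, L t ⊓ Linf = ⊥) := by
  have hLgraph (t : k) : L t = (t • B).mulVecLin.graph.comap (splitCoords k).toLinearMap :=
    (hL t).trans (span_pencilVec_eq_comap_graph B t)
  have hLinfRange : Linf = (LinearMap.inr k _ _).range.comap (splitCoords k).toLinearMap :=
    hLinf.trans span_single_eq_comap_range_inr
  have ker_splitCoords : (splitCoords k).toLinearMap.ker = ⊥ := (splitCoords k).ker
  refine ⟨?_, fun t => ?_, ?_, fun t s hts => ?_, fun t => ?_⟩
  · rw [hL, pencilVec_zero, pencilVec_zero, pencilVec_zero]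
    rfl
  · rw [hLgraph]
    exact (isLagrangian_graph_mulVecLin_iff.mpr (hsym.smul t)).comap_splitCoords
  · rw [hLinfRange]
    exact isLagrangian_range_inr.comap_splitCoords
  · rw [hLgraph, hLgraph]
    exact comap_inf_comap_eq_bot_of_disjoint ker_splitCoords
      (disjoint_graph_smul_mulVecLin hinv.ne_zero hts)
  · rw [hLgraph, hLinfRange]
    exact comap_inf_comap_eq_bot_of_disjoint ker_splitCoords (disjoint_graph_range_inr _)
end

section
/- Let k be a field, B = (b_{ij}) an invertible 3×3 matrix over k, and for t ∈ k let v_i(t) = e_i + t·(b_{1i}e₄ + b_{2i}e₅ + b_{3i}e₆) ∈ k⁶, i = 1, 2, 3. Then there exist elements w₀, w₁, w₂, w₃ of the third exterior power ⋀³(k⁶), independent of t, such that v₁(t) ∧ v₂(t) ∧ v₃(t) = w₀ + t·w₁ + t²·w₂ + t³·w₃ for all t ∈ k, with w₀ = e₁∧e₂∧e₃ and w₃ = det(B)·(e₄∧e₅∧e₆) ≠ 0. (Hence the Plücker image t ↦ [v₁(t)∧v₂(t)∧v₃(t)] of the family of Lagrangian planes exp(tB) is a rational curve of degree exactly 3 —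 the twisted cubic exp(t) = (1 : tB : t²∧²B : t³det(B)) through the three given points of LG(3,6) constructed in Lemma 2.9.) -/
open ExteriorAlgebra

/-!
The wedge product is multilinear, so `⋀ᵢ (aᵢ + t uᵢ)` is a polynomial in `t`: the coefficient of
`t ^ m` collects the terms that choose `uᵢ` in exactly `m` of the factors. The constant term is
`⋀ᵢ aᵢ` and the top coefficient is `⋀ᵢ uᵢ`. When the `uᵢ` are the combinations `∑ⱼ Bⱼᵢ bⱼ`, the
universal property of the determinant gives `⋀ᵢ uᵢ = det B · ⋀ⱼ bⱼ`, and `⋀ⱼ bⱼ ≠ 0` for distinct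
basis vectors `bⱼ`, because it pairs to `1` with the wedge of the dual coordinates.
-/

section Multilinear

variable {R ι N : Type*} {M : ι → Type*} [CommSemiring R] [AddCommMonoid N] [Module R N]
  [∀ i, AddCommMonoid (M i)] [∀ i, Module R (M i)] [DecidableEq ι]

theorem multilinearMap_piecewise_smul (f : MultilinearMap R M N) (a u : ∀ i, M i) (t : R)
    (s : Finset ι) : f (s.piecewise (t • u) a) = t ^ s.card • f (s.piecewise u a) := by
  have h : s.piecewise (t • u) a =
      s.piecewise (fun i ↦ t • s.piecewise u a i) (s.piecewise u a) := by
    ext i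
    by_cases hi : i ∈ s <;> simp [hi]
  rw [h, f.map_piecewise_smul, Finset.prod_const]

variable [Fintype ι]

/-- The coefficient of `t ^ m` in `f (a + t • u)` for a multilinear map `f`: the sum of the values
of `f` on the families that take the entry of `u` at exactly `m` places and that of `a` elsewhere.
It vanishes when `m` exceeds the number of arguments of `f`. -/
def lineCoeff (f : MultilinearMap R M N) (a u : ∀ i, M i) (m : ℕ) : N :=
  ∑ s ∈ Finset.univ.powersetCard m, f (s.piecewise u a)

theorem lineCoeff_zero (f : MultilinearMap R M N) (a u : ∀ i, M i) : lineCoeff f a u 0 = f a := by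
  simp [lineCoeff]

theorem lineCoeff_card (f : MultilinearMap R M N) (a u : ∀ i, M i) :
    lineCoeff f a u (Fintype.card ι) = f u := by
  simp [lineCoeff, ← Finset.card_univ]

theorem multilinearMap_add_smul_eq_sum_lineCoeff (f : MultilinearMap R M N) (a u : ∀ i, M i)
    (t : R) :
    f (a + t • u) = ∑ m ∈ Finset.range (Fintype.card ι + 1), t ^ m • lineCoeff f a u m := by
  rw [add_comm a, f.map_add_univ, ← Finset.powerset_univ, Finset.sum_powerset, Finset.card_univ]
  refine Finset.sum_congr rfl fun m _ ↦ ?_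
  rw [lineCoeff, Finset.smul_sum]
  refine Finset.sum_congr rfl fun s hs ↦ ?_
  rw [multilinearMap_piecewise_smul, (Finset.mem_powersetCard.mp hs).2]

end Multilinear

section Alternating

variable {R M N ι : Type*} [CommRing R] [AddCommGroup M] [Module R M] [AddCommGroup N]
  [Module R N] [Fintype ι] [DecidableEq ι]

theorem alternatingMap_apply_eq_det_smul (f : M [⋀^ι]→ₗ[R] N) (e : Module.Basis ι R M)
    (v : ι → M) : f v = e.det v • f e := by
  suffices h : f = (LinearMap.toSpanSingleton R N (f e)).compAlternatingMap e.det from congr($h v)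
  refine e.ext_alternating fun σ hσ ↦ ?_
  obtain ⟨τ, rfl⟩ : ∃ τ : Equiv.Perm ι, ⇑τ = σ :=
    ⟨Equiv.ofBijective σ (Finite.injective_iff_bijective.mp hσ), rfl⟩
  change f (e ∘ τ) = e.det (e ∘ τ) • f e
  rw [f.map_perm, e.det.map_perm, e.det_self, smul_assoc, one_smul]

theorem alternatingMap_sum_smul_eq_det_smul (f : M [⋀^ι]→ₗ[R] N) (B : Matrix ι ι R)
    (v : ι → M) : f (fun i ↦ ∑ j, B j i • v j) = B.det • f v := by
  let g : (ι → R) [⋀^ι]→ₗ[R] N := f.compLinearMap (Fintype.linearCombination R v)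
  have hg : g (Pi.basisFun R ι) = f v := by simp [g]
  calc f (fun i ↦ ∑ j, B j i • v j)
    _ = g B.col := rfl
    _ = (Matrix.of B.col).det • f v := by
      rw [alternatingMap_apply_eq_det_smul g (Pi.basisFun R ι), hg, Pi.basisFun_det_apply]
    _ = B.det • f v := congr($(B.det_transpose) • f v)

end Alternating

section ExteriorPower

variable {R M : Type*} [CommRing R] [AddCommGroup M] [Module R M]

theorem exteriorPower_ιMulti_basis_comp_ne_zero [Nontrivial R] {I : Type*} {n : ℕ}
    (e : Module.Basis I R M) {s : Fin n → I} (hs : s.Injective) :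
    exteriorPower.ιMulti R n (e ∘ s) ≠ 0 := by
  intro h
  have hpair := exteriorPower.pairingDual_ιMulti_ιMulti (e.coord ∘ s) (e ∘ s)
  have hone : Matrix.of (fun i j ↦ (e.coord ∘ s) j ((e ∘ s) i)) = 1 := by
    ext i j
    simp [Finsupp.single_apply_left hs, Finsupp.single_apply, Matrix.one_apply]
  rw [hone, Matrix.det_one, h, map_zero] at hpair
  exact zero_ne_one hpair

theorem exteriorPower_coe_ιMulti_three (v : Fin 3 → M) :
    (exteriorPower.ιMulti R 3 v : ExteriorAlgebra R M) = ι R (v 0) * ι R (v 1) * ι R (v 2) := by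
  simp only [exteriorPower.ιMulti_apply_coe, ExteriorAlgebra.ιMulti_apply, List.ofFn_succ,
    List.ofFn_zero, List.prod_cons, List.prod_nil, mul_one, mul_assoc]
  rfl

theorem pluecker_image_is_cubic_general [Nontrivial R] {I : Type*} {n : ℕ}
    (e : Module.Basis I R M) {s : Fin n → I} (hs : s.Injective) (a : Fin n → M)
    (B : Matrix (Fin n) (Fin n) R) (hB : IsUnit B.det) :
    ∃ w : ℕ → ⋀[R]^n M,
      w 0 = exteriorPower.ιMulti R n a ∧
      w n = B.det • exteriorPower.ιMulti R n (e ∘ s) ∧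
      w n ≠ 0 ∧
      ∀ t : R, exteriorPower.ιMulti R n (fun i ↦ a i + t • ∑ j, B j i • e (s j)) =
        ∑ m ∈ Finset.range (n + 1), t ^ m • w m := by
  let f := (exteriorPower.ιMulti R n (M := M)).toMultilinearMap
  let u : Fin n → M := fun i ↦ ∑ j, B j i • e (s j)
  have htop : lineCoeff f a u n = B.det • exteriorPower.ιMulti R n (e ∘ s) :=
    calc lineCoeff f a u n
      _ = f u := by simpa only [Fintype.card_fin] using lineCoeff_card f a u
      _ = _ := alternatingMap_sum_smul_eq_det_smul _ B (e ∘ s)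
  refine ⟨lineCoeff f a u, lineCoeff_zero f a u, htop, ?_, fun t ↦ ?_⟩
  · rw [htop, Ne, hB.smul_eq_zero]
    exact exteriorPower_ιMulti_basis_comp_ne_zero e hs
  · change f (a + t • u) = _
    simpa only [Fintype.card_fin] using multilinearMap_add_smul_eq_sum_lineCoeff f a u t

end ExteriorPower

theorem pencilVec_eq_add_smul_sum {k : Type*} [Field k] (B : Matrix (Fin 3) (Fin 3) k) (t : k)
    (i : Fin 3) :
    pencilVec B t i = Pi.basisFun k (Fin 6) (Fin.castAdd 3 i) +
      t • ∑ j, B j i • Pi.basisFun k (Fin 6) (Fin.natAdd 3 j) := by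
  simp only [pencilVec, Pi.basisFun_apply, Fin.sum_univ_three]
  rfl

/-- The Plücker image `t ↦ v₁(t) ∧ v₂(t) ∧ v₃(t)` of the family of Lagrangian
planes `exp(tB)` is a cubic curve: it is a polynomial of degree exactly `3` in
`t` with constant term `e₁∧e₂∧e₃` and leading term `det(B)·(e₄∧e₅∧e₆) ≠ 0`. -/
theorem pluecker_image_is_cubic
    {k : Type*} [Field k] (B : Matrix (Fin 3) (Fin 3) k) (hinv : IsUnit B.det) :
    ∃ w₀ w₁ w₂ w₃ : ExteriorAlgebra k (Fin 6 → k),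
      w₀ = ι k (Pi.single (0 : Fin 6) (1 : k) : Fin 6 → k) *
            ι k (Pi.single (1 : Fin 6) (1 : k) : Fin 6 → k) *
            ι k (Pi.single (2 : Fin 6) (1 : k) : Fin 6 → k) ∧
      w₃ = B.det • (ι k (Pi.single (3 : Fin 6) (1 : k) : Fin 6 → k) *
            ι k (Pi.single (4 : Fin 6) (1 : k) : Fin 6 → k) *
            ι k (Pi.single (5 : Fin 6) (1 : k) : Fin 6 → k)) ∧
      w₃ ≠ 0 ∧
      ∀ t : k,
        ι k (pencilVec B t 0) * ι k (pencilVec B t 1) * ι k (pencilVec B t 2) =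
          w₀ + t • w₁ + t ^ 2 • w₂ + t ^ 3 • w₃ := by
  obtain ⟨w, hw₀, hw₃, hne, hw⟩ := pluecker_image_is_cubic_general (Pi.basisFun k (Fin 6))
    (Fin.natAdd_injective 3 3) (Pi.basisFun k (Fin 6) ∘ Fin.castAdd 3) B hinv
  refine ⟨w 0, w 1, w 2, w 3, ?_, ?_, by simpa using hne, fun t ↦ ?_⟩
  · rw [hw₀, exteriorPower_coe_ιMulti_three]
    simp
  · rw [hw₃, Submodule.coe_smul, exteriorPower_coe_ιMulti_three]
    simp
  · have hpencil : exteriorPower.ιMulti k 3 (pencilVec B t) =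
        w 0 + t • w 1 + t ^ 2 • w 2 + t ^ 3 • w 3 := by
      rw [funext (pencilVec_eq_add_smul_sum B t)]
      simpa [Finset.sum_range_succ] using hw t
    rw [← exteriorPower_coe_ιMulti_three, hpencil]
    simp
end
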